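/- arXiv:1303.5557 — 2 statements merged into one kernel-verified Lean document; each statement's English description precedes it below -/
import Mathlib

section
/- Let φ and ψ be pure states on a C*-algebra A with ‖φ − ψ‖ < 2. Then the GNS representations π_φ and π_ψ are unitarily equivalent. -/
/-!
Suppose that `π` and `ρ` admit no nonzero intertwiner. Then every operator commuting with `π ⊕ ρ` is
block diagonal, and separating by real functionals exhibits `(v, -w)` as a limit of vectors
`(π b v, ρ b w)` with `b` self-adjoint. Applying the cut-off `t ↦ 2t / (1 + t²)` to `b` gives a
contraction at which the vector functionals of `v` and `w` differ by almost `2`. Hence `‖φ - ψ‖ < 2`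
forces a nonzero intertwiner `X`, which may be taken of norm one. With `D = √(1 - X†X)`, the
functional `φ` is the sum of the vector functionals of `X v` and `D v`; as `φ` is pure, both are
multiples of `φ`, so `X†X` is a scalar, i.e. `X` is isometric. By purity of `ψ` so is `X†`.
-/

open NormedSpace
open scoped ComplexInnerProductSpace

variable {A : Type*} [NonUnitalCStarAlgebra A] [StarModule ℂ A]

/-- A state on a C*-algebra: a positive linear functional of norm one. -/
def IsState (φ : A →L[ℂ] ℂ) : Prop :=
  ‖φ‖ = 1 ∧ ∀ a : A, 0 ≤ (φ (star a * a)).re ∧ (φ (star a * a)).im = 0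

/-- A pure state is an extreme point of the state space. -/
def IsPureState (φ : A →L[ℂ] ℂ) : Prop :=
  φ ∈ Set.extremePoints ℝ {ψ : A →L[ℂ] ℂ | IsState ψ}

/-- `(π, v)` is a GNS representation for the state `φ`: `v` is a unit cyclic vector for the
star representation `π` on the Hilbert space `H` and `φ a = ⟨v, π(a) v⟩`. -/
def IsGNSRep (φ : A →L[ℂ] ℂ) {H : Type*} [NormedAddCommGroup H] [InnerProductSpace ℂ H]
    [CompleteSpace H] (π : A →⋆ₙₐ[ℂ] (H →L[ℂ] H)) (v : H) : Prop :=
  ‖v‖ = 1 ∧ (∀ a : A, φ a = ⟪v, π a v⟫) ∧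
    Dense ((Submodule.span ℂ (Set.range fun a : A => π a v) : Submodule ℂ H) : Set H)

/-- Two representations are unitarily equivalent. -/
def UnitarilyEquiv {H K : Type*} [NormedAddCommGroup H] [InnerProductSpace ℂ H]
    [CompleteSpace H] [NormedAddCommGroup K] [InnerProductSpace ℂ K] [CompleteSpace K]
    (π : A →⋆ₙₐ[ℂ] (H →L[ℂ] H)) (ρ : A →⋆ₙₐ[ℂ] (K →L[ℂ] K)) : Prop :=
  ∃ U : H ≃ₗᵢ[ℂ] K, ∀ (a : A) (x : H), U (π a x) = ρ a (U x)

section Representations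

variable {R H K L : Type*} [NonUnitalNonAssocSemiring R] [DistribMulAction ℂ R] [Star R]
  [NormedAddCommGroup H] [InnerProductSpace ℂ H] [CompleteSpace H]
  [NormedAddCommGroup K] [InnerProductSpace ℂ K] [CompleteSpace K]
  [NormedAddCommGroup L] [InnerProductSpace ℂ L] [CompleteSpace L]

lemma inner_rep_left (π : R →⋆ₙₐ[ℂ] (H →L[ℂ] H)) (a : R) (x y : H) :
    ⟪π a x, y⟫ = ⟪x, π (star a) y⟫ := by
  rw [map_star, ContinuousLinearMap.star_eq_adjoint, ContinuousLinearMap.adjoint_inner_right]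

/-- `X` is an intertwiner from the representation `π` to the representation `ρ`. -/
def Intertwines (π : R →⋆ₙₐ[ℂ] (H →L[ℂ] H)) (ρ : R →⋆ₙₐ[ℂ] (K →L[ℂ] K)) (X : H →L[ℂ] K) :
    Prop :=
  ∀ a x, X (π a x) = ρ a (X x)

namespace Intertwines

variable {π : R →⋆ₙₐ[ℂ] (H →L[ℂ] H)} {ρ : R →⋆ₙₐ[ℂ] (K →L[ℂ] K)} {σ : R →⋆ₙₐ[ℂ] (L →L[ℂ] L)}
  {X : H →L[ℂ] K}

lemma comp {Y : K →L[ℂ] L} (hY : Intertwines ρ σ Y) (hX : Intertwines π ρ X) :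
    Intertwines π σ (Y ∘L X) := fun a x => by
  simp only [ContinuousLinearMap.comp_apply, hX a x, hY a (X x)]

lemma smul (c : ℂ) (hX : Intertwines π ρ X) : Intertwines π ρ (c • X) := fun a x => by
  simp only [_root_.smul_apply, hX a x, map_smul]

lemma adjoint (hX : Intertwines π ρ X) : Intertwines ρ π X.adjoint := fun a y =>
  ext_inner_right ℂ fun x => by
    rw [ContinuousLinearMap.adjoint_inner_left, inner_rep_left, inner_rep_left,
      ContinuousLinearMap.adjoint_inner_left, hX]

end Intertwines

lemma intertwines_self_iff_commute {π : R →⋆ₙₐ[ℂ] (H →L[ℂ] H)} {T : H →L[ℂ] H} :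
    Intertwines π π T ↔ ∀ a, Commute T (π a) :=
  forall_congr' fun a => (ContinuousLinearMap.ext_iff (f := T * π a) (g := π a * T)).symm

/-- `π` is nondegenerate: no nonzero vector is killed by every `π a`. -/
def IsNondegenerate (π : R →⋆ₙₐ[ℂ] (H →L[ℂ] H)) : Prop :=
  ∀ x, (∀ a, π a x = 0) → x = 0

/-- `π` and `ρ` are disjoint: there is no nonzero intertwiner between them. -/
def AreDisjoint (π : R →⋆ₙₐ[ℂ] (H →L[ℂ] H)) (ρ : R →⋆ₙₐ[ℂ] (K →L[ℂ] K)) : Prop :=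
  ∀ X, Intertwines π ρ X → X = 0

lemma AreDisjoint.symm {π : R →⋆ₙₐ[ℂ] (H →L[ℂ] H)} {ρ : R →⋆ₙₐ[ℂ] (K →L[ℂ] K)}
    (h : AreDisjoint π ρ) : AreDisjoint ρ π := fun _ hX =>
  (map_eq_zero_iff _ ContinuousLinearMap.adjoint.injective).1 (h _ hX.adjoint)

/-- The direct sum `π ⊕ ρ`, acting on the Hilbert sum `WithLp 2 (H × K)`. -/
noncomputable def repDirectSum (π : R →⋆ₙₐ[ℂ] (H →L[ℂ] H)) (ρ : R →⋆ₙₐ[ℂ] (K →L[ℂ] K)) :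
    R →⋆ₙₐ[ℂ] (WithLp 2 (H × K) →L[ℂ] WithLp 2 (H × K)) where
  toFun a := (WithLp.prodContinuousLinearEquiv 2 ℂ H K).symm.toContinuousLinearMap ∘L
    (π a).prodMap (ρ a) ∘L (WithLp.prodContinuousLinearEquiv 2 ℂ H K).toContinuousLinearMap
  map_smul' c a := by ext x : 1; simp [Prod.map, ← WithLp.toLp_smul]
  map_zero' := by ext x : 1; simp [Prod.map]
  map_add' a b := by ext x : 1; simp [Prod.map, ← WithLp.toLp_add]
  map_mul' a b := by ext x : 1; simp [Prod.map]
  map_star' a := by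
    refine (ContinuousLinearMap.eq_adjoint_iff _ _).2 fun x y => ?_
    simp [WithLp.prod_inner_apply, map_star, ContinuousLinearMap.star_eq_adjoint,
      ContinuousLinearMap.adjoint_inner_left]

lemma repDirectSum_apply (π : R →⋆ₙₐ[ℂ] (H →L[ℂ] H)) (ρ : R →⋆ₙₐ[ℂ] (K →L[ℂ] K)) (a : R)
    (x : WithLp 2 (H × K)) :
    repDirectSum π ρ a x = WithLp.toLp 2 (π a x.fst, ρ a x.snd) := rfl

lemma intertwines_fstL (π : R →⋆ₙₐ[ℂ] (H →L[ℂ] H)) (ρ : R →⋆ₙₐ[ℂ] (K →L[ℂ] K)) :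
    Intertwines (repDirectSum π ρ) π (WithLp.fstL 2 ℂ H K) := fun _ _ => rfl

lemma intertwines_sndL (π : R →⋆ₙₐ[ℂ] (H →L[ℂ] H)) (ρ : R →⋆ₙₐ[ℂ] (K →L[ℂ] K)) :
    Intertwines (repDirectSum π ρ) ρ (WithLp.sndL 2 ℂ H K) := fun _ _ => rfl

lemma IsNondegenerate.repDirectSum {π : R →⋆ₙₐ[ℂ] (H →L[ℂ] H)} {ρ : R →⋆ₙₐ[ℂ] (K →L[ℂ] K)}
    (hπ : IsNondegenerate π) (hρ : IsNondegenerate ρ) : IsNondegenerate (repDirectSum π ρ) :=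
  fun _ hx => WithLp.ofLp_injective 2 <| Prod.ext
    (hπ _ fun a => congrArg WithLp.fst (hx a)) (hρ _ fun a => congrArg WithLp.snd (hx a))

lemma adjoint_fstL_add_adjoint_sndL (x : WithLp 2 (H × K)) :
    (WithLp.fstL 2 ℂ H K).adjoint x.fst + (WithLp.sndL 2 ℂ H K).adjoint x.snd = x :=
  ext_inner_right ℂ fun y => by
    rw [inner_add_left, ContinuousLinearMap.adjoint_inner_left,
      ContinuousLinearMap.adjoint_inner_left]
    rfl

namespace AreDisjoint

variable {π : R →⋆ₙₐ[ℂ] (H →L[ℂ] H)} {ρ : R →⋆ₙₐ[ℂ] (K →L[ℂ] K)} {σ : R →⋆ₙₐ[ℂ] (L →L[ℂ] L)}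

lemma repDirectSum_left (hπ : AreDisjoint π σ) (hρ : AreDisjoint ρ σ) :
    AreDisjoint (repDirectSum π ρ) σ := fun X hX => by
  have hfst := hπ _ (hX.comp (intertwines_fstL π ρ).adjoint)
  have hsnd := hρ _ (hX.comp (intertwines_sndL π ρ).adjoint)
  ext x
  rw [← adjoint_fstL_add_adjoint_sndL x, map_add]
  simpa using congrArg₂ (· + ·) (DFunLike.congr_fun hfst x.fst) (DFunLike.congr_fun hsnd x.snd)

lemma repDirectSum_right (hρ : AreDisjoint π ρ) (hσ : AreDisjoint π σ) :
    AreDisjoint π (repDirectSum ρ σ) :=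
  (hρ.symm.repDirectSum_left hσ.symm).symm

lemma map_adjoint_fstL (h : AreDisjoint π ρ) {T : WithLp 2 (H × K) →L[ℂ] WithLp 2 (H × K)}
    (hT : Intertwines (repDirectSum π ρ) (repDirectSum π ρ) T) (x : WithLp 2 (H × K)) :
    T ((WithLp.fstL 2 ℂ H K).adjoint x.fst) = (WithLp.fstL 2 ℂ H K).adjoint (T x).fst := by
  have h_lower (y : H) : (T ((WithLp.fstL 2 ℂ H K).adjoint y)).snd = 0 := DFunLike.congr_fun
    (h _ (((intertwines_sndL π ρ).comp hT).comp (intertwines_fstL π ρ).adjoint)) y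
  have h_upper (y : K) : (T ((WithLp.sndL 2 ℂ H K).adjoint y)).fst = 0 := DFunLike.congr_fun
    (h.symm _ (((intertwines_fstL π ρ).comp hT).comp (intertwines_sndL π ρ).adjoint)) y
  have h_fst : (T x).fst = (T ((WithLp.fstL 2 ℂ H K).adjoint x.fst)).fst := by
    conv_lhs => rw [← adjoint_fstL_add_adjoint_sndL x, map_add, WithLp.add_fst, h_upper, add_zero]
  have h_split := adjoint_fstL_add_adjoint_sndL (T ((WithLp.fstL 2 ℂ H K).adjoint x.fst))
  rw [h_lower, map_zero, add_zero] at h_split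
  rw [h_fst, h_split]

end AreDisjoint

/-- The closed cyclic subspace generated by `ξ`. -/
noncomputable def cyclicSubspace (π : R →⋆ₙₐ[ℂ] (H →L[ℂ] H)) (ξ : H) : Submodule ℂ H :=
  (Submodule.span ℂ (Set.range fun a => π a ξ)).topologicalClosure

lemma apply_mem_cyclicSubspace (π : R →⋆ₙₐ[ℂ] (H →L[ℂ] H)) (a : R) (ξ : H) :
    π a ξ ∈ cyclicSubspace π ξ :=
  Submodule.le_topologicalClosure _ (Submodule.subset_span ⟨a, rfl⟩)

instance (π : R →⋆ₙₐ[ℂ] (H →L[ℂ] H)) (ξ : H) : CompleteSpace (cyclicSubspace π ξ) :=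
  (Submodule.isClosed_topologicalClosure _).completeSpace_coe

lemma mem_orthogonal_cyclicSubspace_iff {π : R →⋆ₙₐ[ℂ] (H →L[ℂ] H)} {ξ η : H} :
    η ∈ (cyclicSubspace π ξ)ᗮ ↔ ∀ a, ⟪η, π a ξ⟫ = 0 := by
  rw [cyclicSubspace, Submodule.orthogonal_closure, ← Submodule.span_singleton_le_iff_mem,
    ← Submodule.isOrtho_iff_le, Submodule.isOrtho_span]
  simp

lemma cyclicSubspace_mem_invtSubmodule (π : R →⋆ₙₐ[ℂ] (H →L[ℂ] H)) (ξ : H) (a : R) :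
    cyclicSubspace π ξ ∈ Module.End.invtSubmodule (π a).toLinearMap := by
  refine Submodule.topologicalClosure_mem_invtSubmodule ?_
  rw [Module.End.mem_invtSubmodule, Submodule.span_le]
  rintro _ ⟨b, rfl⟩
  exact Submodule.subset_span ⟨a * b, by simp⟩

lemma intertwines_starProjection_cyclicSubspace (π : R →⋆ₙₐ[ℂ] (H →L[ℂ] H)) (ξ : H) :
    Intertwines π π (cyclicSubspace π ξ).starProjection := by
  refine intertwines_self_iff_commute.2 fun a => ?_
  rw [ContinuousLinearMap.IsIdempotentElem.commute_iff
    (Submodule.isIdempotentElem_starProjection _), Submodule.range_starProjection,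
    Submodule.ker_starProjection]
  refine ⟨cyclicSubspace_mem_invtSubmodule π ξ a,
    ContinuousLinearMap.orthogonal_mem_invtSubmodule ?_⟩
  rw [← ContinuousLinearMap.star_eq_adjoint, ← map_star]
  exact cyclicSubspace_mem_invtSubmodule π ξ (star a)

lemma IsNondegenerate.mem_cyclicSubspace_self {π : R →⋆ₙₐ[ℂ] (H →L[ℂ] H)}
    (hπ : IsNondegenerate π) (ξ : H) : ξ ∈ cyclicSubspace π ξ := by
  rw [← Submodule.starProjection_eq_self_iff, ← sub_eq_zero]
  refine hπ _ fun a => ?_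
  rw [map_sub, ← intertwines_starProjection_cyclicSubspace,
    Submodule.starProjection_eq_self_iff.2 (apply_mem_cyclicSubspace π a ξ), sub_self]

lemma AreDisjoint.adjoint_fstL_mem_cyclicSubspace {π : R →⋆ₙₐ[ℂ] (H →L[ℂ] H)}
    {ρ : R →⋆ₙₐ[ℂ] (K →L[ℂ] K)} (h : AreDisjoint π ρ) (hπ : IsNondegenerate π)
    (hρ : IsNondegenerate ρ) (x : WithLp 2 (H × K)) :
    (WithLp.fstL 2 ℂ H K).adjoint x.fst ∈ cyclicSubspace (repDirectSum π ρ) x := by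
  have hx : (cyclicSubspace (repDirectSum π ρ) x).starProjection x = x :=
    Submodule.starProjection_eq_self_iff.2 ((hπ.repDirectSum hρ).mem_cyclicSubspace_self x)
  rw [← Submodule.starProjection_eq_self_iff,
    h.map_adjoint_fstL (intertwines_starProjection_cyclicSubspace _ x), hx]

lemma AreDisjoint.inner_components_eq_zero {π : R →⋆ₙₐ[ℂ] (H →L[ℂ] H)}
    {ρ : R →⋆ₙₐ[ℂ] (K →L[ℂ] K)} (h : AreDisjoint π ρ) (hπ : IsNondegenerate π)
    (hρ : IsNondegenerate ρ) {x y : WithLp 2 (H × K)}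
    (hxy : ∀ a, ⟪y, repDirectSum π ρ a x⟫ = 0) :
    ⟪y.fst, x.fst⟫ = 0 ∧ ⟪y.snd, x.snd⟫ = 0 := by
  have h_orth := (Submodule.mem_orthogonal' _ _).1 (mem_orthogonal_cyclicSubspace_iff.2 hxy)
  have h_fst := h_orth _ (h.adjoint_fstL_mem_cyclicSubspace hπ hρ x)
  rw [ContinuousLinearMap.adjoint_inner_right] at h_fst
  have h_sum := h_orth x ((hπ.repDirectSum hρ).mem_cyclicSubspace_self x)
  rw [WithLp.prod_inner_apply] at h_sum
  exact ⟨h_fst, by simpa [show ⟪y.fst, x.fst⟫ = 0 from h_fst] using h_sum⟩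

lemma AreDisjoint.inner_add_inner_components_eq_zero {π : R →⋆ₙₐ[ℂ] (H →L[ℂ] H)}
    {ρ : R →⋆ₙₐ[ℂ] (K →L[ℂ] K)} (h : AreDisjoint π ρ) (hπ : IsNondegenerate π)
    (hρ : IsNondegenerate ρ) {x y : WithLp 2 (H × K)}
    (hxy : ∀ a, ⟪y, repDirectSum π ρ a x⟫ + ⟪x, repDirectSum π ρ a y⟫ = 0) :
    ⟪y.fst, x.fst⟫ + ⟪x.fst, y.fst⟫ = 0 ∧ ⟪y.snd, x.snd⟫ + ⟪x.snd, y.snd⟫ = 0 := by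
  -- Doubling both representations turns the sum of two matrix coefficients into a single one.
  have h_double : AreDisjoint (repDirectSum π π) (repDirectSum ρ ρ) :=
    (h.repDirectSum_right h).repDirectSum_left (h.repDirectSum_right h)
  have h_orth (a : R) : ⟪WithLp.toLp 2 (WithLp.toLp 2 (y.fst, x.fst), WithLp.toLp 2 (y.snd, x.snd)),
      repDirectSum (repDirectSum π π) (repDirectSum ρ ρ) a
        (.toLp 2 (.toLp 2 (x.fst, y.fst), .toLp 2 (x.snd, y.snd)))⟫ = 0 := by
    have hxy_a := hxy a
    simp only [repDirectSum_apply, WithLp.prod_inner_apply, WithLp.ofLp_fst, WithLp.ofLp_snd,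
      WithLp.toLp_fst, WithLp.toLp_snd] at hxy_a ⊢
    linear_combination hxy_a
  simpa only [WithLp.prod_inner_apply, WithLp.ofLp_fst, WithLp.ofLp_snd, WithLp.toLp_fst,
    WithLp.toLp_snd] using
    h_double.inner_components_eq_zero (hπ.repDirectSum hπ) (hρ.repDirectSum hρ) h_orth

end Representations

section SelfAdjointApproximation

variable {R H K : Type*} [NonUnitalNonAssocRing R] [StarRing R] [Module ℂ R] [StarModule ℂ R]
  [NormedAddCommGroup H] [InnerProductSpace ℂ H] [CompleteSpace H]
  [NormedAddCommGroup K] [InnerProductSpace ℂ K] [CompleteSpace K]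

open ComplexStarModule in
lemma inner_rep_add_inner_rep_eq_zero {σ : R →⋆ₙₐ[ℂ] (H →L[ℂ] H)} {ξ η : H}
    (h : ∀ b, IsSelfAdjoint b → (⟪η, σ b ξ⟫).re = 0) (a : R) :
    ⟪η, σ a ξ⟫ + ⟪ξ, σ a η⟫ = 0 := by
  have h_sa (b : selfAdjoint R) : ⟪η, σ b ξ⟫ + ⟪ξ, σ b η⟫ = 0 := by
    rw [← inner_conj_symm ξ, inner_rep_left, b.2.star_eq, Complex.add_conj, h b b.2]
    simp
  rw [← realPart_add_I_smul_imaginaryPart a]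
  simp only [map_add, map_smul, _root_.add_apply, _root_.smul_apply, inner_add_right,
    inner_smul_right]
  linear_combination h_sa (ℜ a) + Complex.I * h_sa (ℑ a)

lemma exists_isSelfAdjoint_norm_rep_sub_lt {σ : R →⋆ₙₐ[ℂ] (H →L[ℂ] H)} {ξ ζ : H}
    (h : ∀ η, (∀ a, ⟪η, σ a ξ⟫ + ⟪ξ, σ a η⟫ = 0) → (⟪η, ζ⟫).re = 0) {ε : ℝ} (hε : 0 < ε) :
    ∃ b, IsSelfAdjoint b ∧ ‖σ b ξ - ζ‖ < ε := by
  let : InnerProductSpace ℝ H := InnerProductSpace.complexToReal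
  let orbit : R →ₗ[ℝ] H :=
    { toFun a := σ a ξ
      map_add' a b := by simp
      map_smul' r a := by simp [← Complex.coe_smul] }
  let N := (selfAdjoint.submodule ℝ R).map orbit
  have hζ : ζ ∈ N.topologicalClosure := by
    rw [← Submodule.orthogonal_orthogonal_eq_closure, Submodule.mem_orthogonal]
    intro η hη
    refine h η (inner_rep_add_inner_rep_eq_zero fun b hb => ?_)
    exact (Submodule.mem_orthogonal' _ _).1 hη _ ⟨b, hb, rfl⟩
  obtain ⟨_, ⟨b, hb, rfl⟩, hbζ⟩ := Metric.mem_closure_iff.1 hζ ε hε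
  exact ⟨b, hb, by rwa [dist_comm, dist_eq_norm] at hbζ⟩

lemma AreDisjoint.exists_isSelfAdjoint_norm_sq_add_norm_sq_lt {π : R →⋆ₙₐ[ℂ] (H →L[ℂ] H)}
    {ρ : R →⋆ₙₐ[ℂ] (K →L[ℂ] K)} (h : AreDisjoint π ρ) (hπ : IsNondegenerate π)
    (hρ : IsNondegenerate ρ) (v : H) (w : K) {ε : ℝ} (hε : 0 < ε) :
    ∃ b, IsSelfAdjoint b ∧ ‖π b v - v‖ ^ 2 + ‖ρ b w + w‖ ^ 2 < ε := by
  have h_sep (η : WithLp 2 (H × K))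
      (hη : ∀ a, ⟪η, repDirectSum π ρ a (.toLp 2 (v, w))⟫ +
        ⟪WithLp.toLp 2 (v, w), repDirectSum π ρ a η⟫ = 0) :
      (⟪η, .toLp 2 (v, -w)⟫).re = 0 := by
    obtain ⟨hv, hw⟩ := h.inner_add_inner_components_eq_zero hπ hρ hη
    rw [← inner_conj_symm _ η.fst, Complex.add_conj, Complex.ofReal_eq_zero] at hv
    rw [← inner_conj_symm _ η.snd, Complex.add_conj, Complex.ofReal_eq_zero] at hw
    simp only [WithLp.prod_inner_apply, WithLp.ofLp_fst, WithLp.ofLp_snd, WithLp.toLp_fst,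
      WithLp.toLp_snd, inner_neg_right, Complex.add_re, Complex.neg_re] at hv hw ⊢
    linarith
  obtain ⟨b, hb, hbε⟩ := exists_isSelfAdjoint_norm_rep_sub_lt h_sep (Real.sqrt_pos.2 hε)
  refine ⟨b, hb, ?_⟩
  rw [Real.lt_sqrt (norm_nonneg _), WithLp.prod_norm_sq_eq_of_L2] at hbε
  simpa [repDirectSum_apply] using hbε

end SelfAdjointApproximation

section Cutoff

/-- The rational cut-off `2t / (1 + t²)`, bounded by one and satisfying
`1 - unitCutoff t ≤ (t - 1)²` and `1 + unitCutoff t ≤ (t + 1)²`. -/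
noncomputable def unitCutoff (t : ℝ) : ℝ :=
  2 * t / (1 + t ^ 2)

@[simp]
lemma unitCutoff_zero : unitCutoff 0 = 0 := by
  simp [unitCutoff]

@[fun_prop]
lemma continuous_unitCutoff : Continuous unitCutoff :=
  Continuous.div (by fun_prop) (by fun_prop) fun t => by positivity

lemma abs_unitCutoff_le_one (t : ℝ) : |unitCutoff t| ≤ 1 := by
  rw [unitCutoff, abs_div, abs_of_pos (show 0 < 1 + t ^ 2 by positivity),
    div_le_one (by positivity), abs_le]
  constructor <;> nlinarith [sq_nonneg (t - 1), sq_nonneg (t + 1)]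

lemma two_mul_sub_sq_le_mul_unitCutoff {s : ℝ} (hs : s ^ 2 = 1) (t : ℝ) :
    2 * s * t - t ^ 2 ≤ s * unitCutoff t := by
  have ht : 0 < 1 + t ^ 2 := by positivity
  rw [unitCutoff, ← mul_div_assoc, le_div_iff₀ ht]
  nlinarith [mul_nonneg (sq_nonneg t) (sq_nonneg (t - s))]

variable {B H K : Type*} [NonUnitalCStarAlgebra B]
  [NormedAddCommGroup H] [InnerProductSpace ℂ H] [CompleteSpace H]

lemma norm_cfcₙ_unitCutoff_le_one (b : B) : ‖cfcₙ unitCutoff b‖ ≤ 1 :=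
  norm_cfcₙ_le fun t _ => abs_unitCutoff_le_one t

lemma two_smul_sub_sq_le_smul_cfcₙ_unitCutoff {T : H →L[ℂ] H} (hT : IsSelfAdjoint T) {s : ℝ}
    (hs : s ^ 2 = 1) : (2 * s) • T - T ^ 2 ≤ s • cfcₙ unitCutoff T := by
  have h_left : (2 * s) • T - T ^ 2 = cfc (fun t : ℝ => 2 * s * t - t ^ 2) T := by
    rw [cfc_sub .., cfc_const_mul .., cfc_pow .., cfc_id' ℝ T]
  rw [h_left, cfcₙ_eq_cfc, ← cfc_smul ..]
  exact cfc_mono (fun t _ => two_mul_sub_sq_le_mul_unitCutoff hs t)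
    (hg := by simp only [smul_eq_mul]; fun_prop)

lemma norm_sq_sub_norm_sq_le_mul_re_inner_cfcₙ_unitCutoff {T : H →L[ℂ] H}
    (hT : IsSelfAdjoint T) {s : ℝ} (hs : s ^ 2 = 1) (v : H) :
    ‖v‖ ^ 2 - ‖T v - s • v‖ ^ 2 ≤ s * (⟪v, cfcₙ unitCutoff T v⟫).re := by
  have h_sq : (⟪v, T (T v)⟫).re = ‖T v‖ ^ 2 := by
    rw [← ContinuousLinearMap.adjoint_inner_left, ← ContinuousLinearMap.star_eq_adjoint,
      hT.star_eq, ← RCLike.re_eq_complex_re, inner_self_eq_norm_sq]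
  have h_pos : 2 * s * (⟪v, T v⟫).re - ‖T v‖ ^ 2 ≤ s * (⟪v, cfcₙ unitCutoff T v⟫).re := by
    simpa [inner_sub_right, pow_two T, ← Complex.coe_smul, inner_smul_right, h_sq] using
      ((ContinuousLinearMap.le_def _ _).1
        (two_smul_sub_sq_le_smul_cfcₙ_unitCutoff hT hs)).re_inner_nonneg_right v
  have h_norm : ‖T v - s • v‖ ^ 2 = ‖v‖ ^ 2 - 2 * s * (⟪v, T v⟫).re + ‖T v‖ ^ 2 := by
    rw [norm_sub_rev, norm_sub_sq (𝕜 := ℂ), norm_smul, mul_pow, Real.norm_eq_abs, sq_abs, hs,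
      one_mul, ← Complex.coe_smul, inner_smul_left]
    simp [mul_assoc]
  linarith

end Cutoff

section VectorFunctionals

variable {B H K : Type*} [NonUnitalCStarAlgebra B]
  [NormedAddCommGroup H] [InnerProductSpace ℂ H] [CompleteSpace H]
  [NormedAddCommGroup K] [InnerProductSpace ℂ K] [CompleteSpace K]

/-- The vector functional `a ↦ ⟪x, π a x⟫`. -/
noncomputable def vectorFunctional (π : B →⋆ₙₐ[ℂ] (H →L[ℂ] H)) (x : H) : B →L[ℂ] ℂ :=
  LinearMap.mkContinuous
    { toFun a := ⟪x, π a x⟫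
      map_add' a b := by simp
      map_smul' c a := by simp } (‖x‖ ^ 2) fun a =>
    calc ‖⟪x, π a x⟫‖ ≤ ‖x‖ * (‖π a‖ * ‖x‖) :=
          (norm_inner_le_norm _ _).trans (by gcongr; exact (π a).le_opNorm x)
      _ ≤ ‖x‖ * (‖a‖ * ‖x‖) := by gcongr; exact NonUnitalStarAlgHom.norm_apply_le π a
      _ = ‖x‖ ^ 2 * ‖a‖ := by ring

lemma vectorFunctional_apply (π : B →⋆ₙₐ[ℂ] (H →L[ℂ] H)) (x : H) (a : B) :
    vectorFunctional π x a = ⟪x, π a x⟫ := rfl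

lemma norm_vectorFunctional_le (π : B →⋆ₙₐ[ℂ] (H →L[ℂ] H)) (x : H) :
    ‖vectorFunctional π x‖ ≤ ‖x‖ ^ 2 :=
  LinearMap.mkContinuous_norm_le _ (by positivity) _

lemma vectorFunctional_star_mul_self (π : B →⋆ₙₐ[ℂ] (H →L[ℂ] H)) (x : H) (a : B) :
    vectorFunctional π x (star a * a) = (‖π a x‖ ^ 2 : ℝ) := by
  rw [vectorFunctional_apply, map_mul, _root_.mul_apply_eq_comp, ← inner_rep_left,
    inner_self_eq_norm_sq_to_K]
  simp

open scoped CStarAlgebra in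
lemma norm_sq_sub_norm_sq_le_mul_re_vectorFunctional_cfcₙ (π : B →⋆ₙₐ[ℂ] (H →L[ℂ] H)) {b : B}
    (hb : IsSelfAdjoint b) {s : ℝ} (hs : s ^ 2 = 1) (v : H) :
    ‖v‖ ^ 2 - ‖π b v - s • v‖ ^ 2 ≤ s * (vectorFunctional π v (cfcₙ unitCutoff b)).re := by
  rw [vectorFunctional_apply, NonUnitalStarAlgHom.map_cfcₙ π unitCutoff b]
  exact norm_sq_sub_norm_sq_le_mul_re_inner_cfcₙ_unitCutoff (hb.map π) hs v

lemma AreDisjoint.norm_sq_add_norm_sq_le_norm_vectorFunctional_sub {π : B →⋆ₙₐ[ℂ] (H →L[ℂ] H)}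
    {ρ : B →⋆ₙₐ[ℂ] (K →L[ℂ] K)} (h : AreDisjoint π ρ) (hπ : IsNondegenerate π)
    (hρ : IsNondegenerate ρ) (v : H) (w : K) :
    ‖v‖ ^ 2 + ‖w‖ ^ 2 ≤ ‖vectorFunctional π v - vectorFunctional ρ w‖ := by
  refine le_of_forall_pos_sub_le fun ε hε => ?_
  obtain ⟨b, hb, hbε⟩ := h.exists_isSelfAdjoint_norm_sq_add_norm_sq_lt hπ hρ v w hε
  set c := cfcₙ unitCutoff b
  have h_v := norm_sq_sub_norm_sq_le_mul_re_vectorFunctional_cfcₙ π hb (s := 1) (by norm_num) v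
  have h_w := norm_sq_sub_norm_sq_le_mul_re_vectorFunctional_cfcₙ ρ hb (s := -1) (by norm_num) w
  rw [one_smul] at h_v
  rw [neg_smul, one_smul, sub_neg_eq_add] at h_w
  calc ‖v‖ ^ 2 + ‖w‖ ^ 2 - ε ≤ (vectorFunctional π v c - vectorFunctional ρ w c).re := by
        rw [Complex.sub_re]; linarith
    _ ≤ ‖(vectorFunctional π v - vectorFunctional ρ w) c‖ := Complex.re_le_norm _
    _ ≤ ‖vectorFunctional π v - vectorFunctional ρ w‖ :=
        ContinuousLinearMap.unit_le_opNorm _ c (norm_cfcₙ_unitCutoff_le_one b)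

end VectorFunctionals

section PureStates

variable {B H K : Type*} [NonUnitalCStarAlgebra B]
  [NormedAddCommGroup H] [InnerProductSpace ℂ H] [CompleteSpace H]
  [NormedAddCommGroup K] [InnerProductSpace ℂ K] [CompleteSpace K]

/-- Positivity of a bounded functional, in the form in which it enters `IsState`. -/
def IsPositiveFunctional (f : B →L[ℂ] ℂ) : Prop :=
  ∀ a, 0 ≤ (f (star a * a)).re ∧ (f (star a * a)).im = 0

lemma isPositiveFunctional_vectorFunctional (π : B →⋆ₙₐ[ℂ] (H →L[ℂ] H)) (x : H) :
    IsPositiveFunctional (vectorFunctional π x) := fun a => by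
  rw [vectorFunctional_star_mul_self]
  exact ⟨sq_nonneg _, Complex.ofReal_im _⟩

lemma IsPositiveFunctional.isState_inv_smul {f : B →L[ℂ] ℂ} (hf : IsPositiveFunctional f)
    (hf0 : f ≠ 0) : IsState (‖f‖⁻¹ • f) := by
  refine ⟨?_, fun a => ?_⟩
  · rw [norm_smul, norm_inv, norm_norm, inv_mul_cancel₀ (norm_ne_zero_iff.2 hf0)]
  · simp [hf a, mul_nonneg]

lemma IsPureState.eq_norm_smul_of_add_eq {φ f g : B →L[ℂ] ℂ} (hφ : IsPureState φ)
    (hf : IsPositiveFunctional f) (hg : IsPositiveFunctional g) (h_add : f + g = φ)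
    (h_norm : ‖f‖ + ‖g‖ = 1) : f = ‖f‖ • φ := by
  rcases eq_or_ne f 0 with rfl | hf0
  · rw [norm_zero]
    exact (zero_smul ℝ φ).symm
  rcases eq_or_ne g 0 with rfl | hg0
  · simp_all
  have h_mid : ‖f‖⁻¹ • f = φ := by
    refine (mem_extremePoints_iff_left.1 hφ).2 _ (hf.isState_inv_smul hf0) _
      (hg.isState_inv_smul hg0) ⟨‖f‖, ‖g‖, norm_pos_iff.2 hf0, norm_pos_iff.2 hg0, h_norm, ?_⟩
    rw [smul_inv_smul₀ (norm_ne_zero_iff.2 hf0), smul_inv_smul₀ (norm_ne_zero_iff.2 hg0), h_add]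
  rw [← h_mid, smul_inv_smul₀ (norm_ne_zero_iff.2 hf0)]

lemma IsPureState.vectorFunctional_eq_norm_sq_smul {φ : B →L[ℂ] ℂ} (hφ : IsPureState φ)
    {π : B →⋆ₙₐ[ℂ] (H →L[ℂ] H)} {ρ : B →⋆ₙₐ[ℂ] (K →L[ℂ] K)} {x : H} {y : K}
    (h_add : vectorFunctional π x + vectorFunctional ρ y = φ) (h_norm : ‖x‖ ^ 2 + ‖y‖ ^ 2 = 1) :
    vectorFunctional π x = ‖x‖ ^ 2 • φ := by
  have hx := norm_vectorFunctional_le π x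
  have hy := norm_vectorFunctional_le ρ y
  have h_one : 1 ≤ ‖vectorFunctional π x‖ + ‖vectorFunctional ρ y‖ :=
    hφ.1.1 ▸ h_add ▸ norm_add_le _ _
  have hx_eq : ‖vectorFunctional π x‖ = ‖x‖ ^ 2 := by linarith
  rw [← hx_eq]
  exact hφ.eq_norm_smul_of_add_eq (isPositiveFunctional_vectorFunctional π x)
    (isPositiveFunctional_vectorFunctional ρ y) h_add (by linarith)

namespace IsGNSRep

variable {φ : B →L[ℂ] ℂ} {π : B →⋆ₙₐ[ℂ] (H →L[ℂ] H)} {ρ : B →⋆ₙₐ[ℂ] (K →L[ℂ] K)} {v : H}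

lemma vectorFunctional_eq (h : IsGNSRep φ π v) : vectorFunctional π v = φ :=
  ContinuousLinearMap.ext fun a => (h.2.1 a).symm

lemma eq_zero_of_inner_rep_eq_zero (h : IsGNSRep φ π v) {x : H} (hx : ∀ a, ⟪x, π a v⟫ = 0) :
    x = 0 := by
  have h_top : cyclicSubspace π v = ⊤ := Submodule.dense_iff_topologicalClosure_eq_top.1 h.2.2
  simpa [h_top] using mem_orthogonal_cyclicSubspace_iff.2 hx

lemma isNondegenerate (h : IsGNSRep φ π v) : IsNondegenerate π := fun x hx =>
  h.eq_zero_of_inner_rep_eq_zero fun a => by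
    rw [← star_star a, ← inner_rep_left, hx, inner_zero_left]

lemma intertwines_ext (h : IsGNSRep φ π v) {X Y : H →L[ℂ] K} (hX : Intertwines π ρ X)
    (hY : Intertwines π ρ Y) (h_eq : X v = Y v) : X = Y :=
  ContinuousLinearMap.ext_on h.2.2 <| by
    rintro _ ⟨a, rfl⟩
    rw [hX, hY, h_eq]

end IsGNSRep

lemma exists_isSelfAdjoint_intertwines_mul_self_eq_one_sub {π : B →⋆ₙₐ[ℂ] (H →L[ℂ] H)}
    {ρ : B →⋆ₙₐ[ℂ] (K →L[ℂ] K)} {X : H →L[ℂ] K} (hX : Intertwines π ρ X) (hX_le : ‖X‖ ≤ 1) :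
    ∃ D, IsSelfAdjoint D ∧ Intertwines π π D ∧ D * D = 1 - X.adjoint ∘L X := by
  have h_nonneg : 0 ≤ 1 - X.adjoint ∘L X := by
    have h_norm : ‖X.adjoint ∘L X‖ ≤ 1 := by
      rw [ContinuousLinearMap.norm_adjoint_comp_self]
      exact mul_le_one₀ hX_le (norm_nonneg _) hX_le
    have h_sa : IsSelfAdjoint (X.adjoint ∘L X) := by
      rw [ContinuousLinearMap.isSelfAdjoint_iff', ContinuousLinearMap.adjoint_comp,
        ContinuousLinearMap.adjoint_adjoint]
    have := h_sa.le_algebraMap_norm_self.trans (algebraMap_mono (H →L[ℂ] H) h_norm)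
    rwa [map_one, ← sub_nonneg] at this
  refine ⟨CFC.sqrt (1 - X.adjoint ∘L X), .of_nonneg (CFC.sqrt_nonneg _),
    intertwines_self_iff_commute.2 fun a => ?_, CFC.sqrt_mul_sqrt_self _ h_nonneg⟩
  have h_comm := intertwines_self_iff_commute.1 (hX.adjoint.comp hX) a
  exact ((Commute.one_left _).sub_left h_comm).cfcₙ_nnreal _

lemma IsGNSRep.vectorFunctional_intertwiner_eq_norm_sq_smul {φ : B →L[ℂ] ℂ}
    {π : B →⋆ₙₐ[ℂ] (H →L[ℂ] H)} {v : H} (h : IsGNSRep φ π v) (hφ : IsPureState φ)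
    {ρ : B →⋆ₙₐ[ℂ] (K →L[ℂ] K)} {X : H →L[ℂ] K} (hX : Intertwines π ρ X) (hX_le : ‖X‖ ≤ 1) :
    vectorFunctional ρ (X v) = ‖X v‖ ^ 2 • φ := by
  obtain ⟨D, hD_sa, hD, hD_sq⟩ := exists_isSelfAdjoint_intertwines_mul_self_eq_one_sub hX hX_le
  have h_inner (x : H) : ⟪X v, X x⟫ + ⟪D v, D x⟫ = ⟪v, x⟫ := by
    have hDx := DFunLike.congr_fun hD_sq x
    rw [← ContinuousLinearMap.adjoint_inner_right X, ← ContinuousLinearMap.adjoint_inner_right D,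
      ← ContinuousLinearMap.star_eq_adjoint D, hD_sa.star_eq, ← inner_add_right]
    exact congrArg _ (by simpa [eq_sub_iff_add_eq'] using hDx)
  refine hφ.vectorFunctional_eq_norm_sq_smul (ρ := π) (y := D v) ?_ ?_
  · ext a
    rw [_root_.add_apply, vectorFunctional_apply, vectorFunctional_apply, ← hX, ← hD, h_inner,
      h.2.1]
  · rw [← Complex.ofReal_inj]
    simpa [inner_self_eq_norm_sq_to_K, h.1] using h_inner v

lemma IsGNSRep.adjoint_comp_self_eq_smul {φ : B →L[ℂ] ℂ} {π : B →⋆ₙₐ[ℂ] (H →L[ℂ] H)} {v : H}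
    (h : IsGNSRep φ π v) (hφ : IsPureState φ) {ρ : B →⋆ₙₐ[ℂ] (K →L[ℂ] K)} {X : H →L[ℂ] K}
    (hX : Intertwines π ρ X) (hX_le : ‖X‖ ≤ 1) :
    X.adjoint ∘L X = (‖X v‖ ^ 2 : ℂ) • 1 := by
  refine h.intertwines_ext (hX.adjoint.comp hX)
    (Intertwines.smul (‖X v‖ ^ 2 : ℂ) fun _ _ => rfl) ?_
  refine sub_eq_zero.1 (h.eq_zero_of_inner_rep_eq_zero fun a => ?_)
  have h_a := DFunLike.congr_fun (h.vectorFunctional_intertwiner_eq_norm_sq_smul hφ hX hX_le) a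
  rw [vectorFunctional_apply, ← hX, ← ContinuousLinearMap.adjoint_inner_left,
    _root_.smul_apply, h.2.1] at h_a
  rw [inner_sub_left, ContinuousLinearMap.comp_apply, h_a]
  simp [inner_smul_left]

lemma IsGNSRep.adjoint_comp_self_eq_one {φ : B →L[ℂ] ℂ} {π : B →⋆ₙₐ[ℂ] (H →L[ℂ] H)} {v : H}
    (h : IsGNSRep φ π v) (hφ : IsPureState φ) {ρ : B →⋆ₙₐ[ℂ] (K →L[ℂ] K)} {X : H →L[ℂ] K}
    (hX : Intertwines π ρ X) (hX_norm : ‖X‖ = 1) : X.adjoint ∘L X = 1 := by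
  have h_smul := h.adjoint_comp_self_eq_smul hφ hX hX_norm.le
  have : Nontrivial H := ⟨v, 0, norm_ne_zero_iff.1 (h.1 ▸ one_ne_zero)⟩
  have h_sq : ‖X v‖ ^ 2 = 1 := by
    have h_norm := congrArg norm h_smul
    rw [ContinuousLinearMap.norm_adjoint_comp_self, hX_norm, norm_smul, norm_one] at h_norm
    simpa using h_norm.symm
  rw [h_smul, ← Complex.ofReal_pow, h_sq, Complex.ofReal_one, one_smul]

lemma Intertwines.unitarilyEquiv {π : B →⋆ₙₐ[ℂ] (H →L[ℂ] H)} {ρ : B →⋆ₙₐ[ℂ] (K →L[ℂ] K)}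
    {X : H →L[ℂ] K} (hX : Intertwines π ρ X) (h_left : X.adjoint ∘L X = 1)
    (h_right : X ∘L X.adjoint = 1) : UnitarilyEquiv π ρ := by
  let U : H →ₗᵢ[ℂ] K := ⟨X, (ContinuousLinearMap.norm_map_iff_adjoint_comp_self X).2 h_left⟩
  exact ⟨.ofSurjective U fun y => ⟨X.adjoint y, DFunLike.congr_fun h_right y⟩, hX⟩

lemma Intertwines.unitarilyEquiv_of_isPureState {φ ψ : B →L[ℂ] ℂ} (hφ : IsPureState φ)
    (hψ : IsPureState ψ) {π : B →⋆ₙₐ[ℂ] (H →L[ℂ] H)} {v : H} (hπ : IsGNSRep φ π v)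
    {ρ : B →⋆ₙₐ[ℂ] (K →L[ℂ] K)} {w : K} (hρ : IsGNSRep ψ ρ w) {X : H →L[ℂ] K}
    (hX : Intertwines π ρ X) (hX0 : X ≠ 0) : UnitarilyEquiv π ρ := by
  have hY := hX.smul (‖X‖⁻¹ : ℂ)
  set Y := (‖X‖⁻¹ : ℂ) • X
  have hY_norm : ‖Y‖ = 1 := norm_smul_inv_norm hX0
  have h_right := hρ.adjoint_comp_self_eq_one hψ hY.adjoint (by simpa using hY_norm)
  rw [ContinuousLinearMap.adjoint_adjoint] at h_right
  exact hY.unitarilyEquiv (hπ.adjoint_comp_self_eq_one hφ hY hY_norm) h_right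

end PureStates

/-- If `φ` and `ψ` are pure states on a C*-algebra with `‖φ - ψ‖ < 2`, then their GNS
representations are unitarily equivalent. -/
theorem gns_equiv_of_pure_states_dist_lt_two
    (φ ψ : A →L[ℂ] ℂ) (hφ : IsPureState φ) (hψ : IsPureState ψ)
    (hdist : ‖φ - ψ‖ < 2)
    {H K : Type*} [NormedAddCommGroup H] [InnerProductSpace ℂ H] [CompleteSpace H]
    [NormedAddCommGroup K] [InnerProductSpace ℂ K] [CompleteSpace K]
    (π : A →⋆ₙₐ[ℂ] (H →L[ℂ] H)) (v : H) (hπ : IsGNSRep φ π v)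
    (ρ : A →⋆ₙₐ[ℂ] (K →L[ℂ] K)) (w : K) (hρ : IsGNSRep ψ ρ w) :
    UnitarilyEquiv π ρ := by
  have h_not_disjoint : ¬ AreDisjoint π ρ := fun h_disjoint => by
    have h_two := h_disjoint.norm_sq_add_norm_sq_le_norm_vectorFunctional_sub
      hπ.isNondegenerate hρ.isNondegenerate v w
    rw [hπ.vectorFunctional_eq, hρ.vectorFunctional_eq, hπ.1, hρ.1] at h_two
    linarith
  obtain ⟨X, hX, hX0⟩ : ∃ X, Intertwines π ρ X ∧ X ≠ 0 := by
    simpa only [AreDisjoint, not_forall, exists_prop] using h_not_disjoint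
  exact hX.unitarilyEquiv_of_isPureState hφ hψ hπ hρ hX0
end

section
/- (Alspach) The space L¹([0,1]) does not have the weak fixed point property: there exists a nonempty convex weakly compact subset K of L¹([0,1]) and a non-expansive (indeed isometric) map T : K → K with no fixed point. -/
open MeasureTheory Set

/-! Alspach's map compresses the graph of `f ∈ K` horizontally to `[0, 1/2]`, stretches it
vertically to height `4`, cuts off what lies above height `2` and puts the cut-off piece on
`[1/2, 1]`. The two pieces are increasing functions of `f` whose sum is `2 f`, so distances are
preserved. By the parallelogram law `∫ (T f)² = ∫ f² + ∫ (d / 2)²`, where `d` is the difference of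
the two pieces. Hence at a fixed point both pieces coincide with `f`, so `f` is invariant under the
doubling map `t ↦ 2 t mod 1`. Ergodicity makes `f` constant, equal to `1` because `∫ f = 1`, and
for this constant the two pieces differ.

For weak compactness, `|f| ≤ h` with `h` integrable gives `f = √h • q` with `‖q‖₂ ≤ ‖√h‖₂`, so an
order-bounded subset of `L¹` lies in the image of a ball of `L²` under a bounded operator. -/

section WeakCompactness

theorem isCompact_toWeakSpace_image_closedBall (𝕜 : Type*) {H : Type*} [RCLike 𝕜]
    [NormedAddCommGroup H] [InnerProductSpace 𝕜 H] [CompleteSpace H] (x : H) (r : ℝ) :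
    IsCompact (toWeakSpace 𝕜 H '' Metric.closedBall x r) := by
  let toDual := InnerProductSpace.toDual 𝕜 H
  let riesz : WeakDual 𝕜 H → WeakSpace 𝕜 H := fun φ ↦
    toWeakSpace 𝕜 H (toDual.symm (WeakDual.toStrongDual φ))
  have continuous_riesz : Continuous riesz := by
    refine WeakBilin.continuous_of_continuous_eval _ fun ψ ↦ ?_
    have eval_riesz (φ : WeakDual 𝕜 H) :
        star (φ (toDual.symm ψ)) = ψ (toDual.symm (WeakDual.toStrongDual φ)) := by
      rw [← WeakDual.toStrongDual_apply, ← InnerProductSpace.toDual_symm_apply,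
        ← InnerProductSpace.toDual_symm_apply (y := ψ)]
      exact inner_conj_symm _ _
    exact (continuous_star.comp (WeakDual.eval_continuous (toDual.symm ψ))).congr eval_riesz
  have preimage_ball : WeakDual.toStrongDual ⁻¹' Metric.closedBall (toDual x) r =
      StrongDual.toWeakDual '' (toDual '' Metric.closedBall x r) := by
    rw [toDual.image_closedBall, LinearEquiv.image_eq_preimage_symm, StrongDual.symm_toWeakDual]
  have image_riesz : riesz '' (WeakDual.toStrongDual ⁻¹' Metric.closedBall (toDual x) r) =
      toWeakSpace 𝕜 H '' Metric.closedBall x r := by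
    rw [preimage_ball, image_image, image_image]
    exact image_congr fun y _ ↦ by
      simp only [riesz, StrongDual.toStrongDual_toWeakDual, LinearIsometryEquiv.symm_apply_apply]
  exact image_riesz ▸ (WeakDual.isCompact_closedBall (toDual x) r).image continuous_riesz

variable {α E : Type*} {m : MeasurableSpace α} {μ : Measure α} [NormedAddCommGroup E]

theorem memLp_two_sqrt {h : α → ℝ} (hh : Integrable h μ) : MemLp (fun t ↦ √(h t)) 2 μ := by
  rw [memLp_two_iff_integrable_sq hh.aestronglyMeasurable.aemeasurable.sqrt.aestronglyMeasurable]
  simp only [Real.sq_sqrt']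
  exact hh.sup (integrable_zero _ _ _)

theorem exists_Lp_two_sqrt_smul_eq [NormedSpace ℝ E] {h : α → ℝ} (hh : Integrable h μ)
    {f : α → E} (hf : AEStronglyMeasurable f μ) (hf_le : ∀ᵐ t ∂μ, ‖f t‖ ≤ h t) :
    ∃ q : Lp E 2 μ, ‖q‖ ≤ ‖(memLp_two_sqrt hh).toLp‖ ∧ ∀ᵐ t ∂μ, √(h t) • q t = f t := by
  let q : α → E := fun t ↦ (√(h t))⁻¹ • f t
  have norm_q_le : ∀ᵐ t ∂μ, ‖q t‖ ≤ ‖√(h t)‖ := by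
    filter_upwards [hf_le] with t ht
    rw [norm_smul, norm_inv, Real.norm_of_nonneg (Real.sqrt_nonneg _)]
    refine inv_mul_le_of_le_mul₀ (Real.sqrt_nonneg _) (Real.sqrt_nonneg _) ?_
    rwa [Real.mul_self_sqrt ((norm_nonneg _).trans ht)]
  have aestronglyMeasurable_q : AEStronglyMeasurable q μ :=
    hh.aestronglyMeasurable.aemeasurable.sqrt.inv.aestronglyMeasurable.smul hf
  have memLp_q : MemLp q 2 μ := (memLp_two_sqrt hh).mono aestronglyMeasurable_q norm_q_le
  refine ⟨memLp_q.toLp, Lp.norm_le_norm_of_ae_le ?_, ?_⟩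
  · filter_upwards [memLp_q.coeFn_toLp, (memLp_two_sqrt hh).coeFn_toLp, norm_q_le]
      with t hq hsqrt ht
    rwa [hq, hsqrt]
  · filter_upwards [memLp_q.coeFn_toLp, hf_le] with t hq ht
    rw [hq]
    by_cases sqrt_eq_zero : √(h t) = 0
    · have f_eq_zero : f t = 0 :=
        norm_le_zero_iff.mp (ht.trans (Real.sqrt_eq_zero'.mp sqrt_eq_zero))
      rw [sqrt_eq_zero, f_eq_zero, zero_smul]
    · exact smul_inv_smul₀ sqrt_eq_zero _

theorem isCompact_toWeakSpace_image_of_ae_norm_le {E : Type*} [NormedAddCommGroup E]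
    [InnerProductSpace ℝ E] [CompleteSpace E] {K : Set (Lp E 1 μ)} (hK_convex : Convex ℝ K)
    (hK_closed : IsClosed K) {h : α → ℝ} (hh : Integrable h μ)
    (hK_le : ∀ f ∈ K, ∀ᵐ t ∂μ, ‖f t‖ ≤ h t) :
    IsCompact (toWeakSpace ℝ (Lp E 1 μ) '' K) := by
  let w : Lp ℝ 2 μ := (memLp_two_sqrt hh).toLp
  let mulW : Lp E 2 μ →L[ℝ] Lp E 1 μ := (ContinuousLinearMap.lsmul ℝ ℝ).holderL μ 2 2 1 w
  have isClosed_weak : IsClosed (toWeakSpace ℝ (Lp E 1 μ) '' K) := by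
    rw [← hK_closed.closure_eq, hK_convex.toWeakSpace_closure ℝ]
    exact isClosed_closure
  refine ((isCompact_toWeakSpace_image_closedBall ℝ (0 : Lp E 2 μ) ‖w‖).image
    (WeakSpace.map mulW).continuous).of_isClosed_subset isClosed_weak ?_
  rintro _ ⟨f, hf, rfl⟩
  obtain ⟨q, norm_q_le, sqrt_smul_q⟩ :=
    exists_Lp_two_sqrt_smul_eq hh (Lp.aestronglyMeasurable f) (hK_le f hf)
  have mulW_q : mulW q = f := by
    refine Lp.ext ?_
    filter_upwards [(ContinuousLinearMap.lsmul ℝ ℝ).coeFn_holder (r := 1) w q,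
      (memLp_two_sqrt hh).coeFn_toLp, sqrt_smul_q] with t hmul hsqrt ht
    exact hmul.trans (by rw [hsqrt, ContinuousLinearMap.lsmul_apply, ht])
  exact ⟨toWeakSpace ℝ _ q, mem_image_of_mem _ (mem_closedBall_zero_iff.mpr norm_q_le),
    congrArg (toWeakSpace ℝ _) mulW_q⟩

end WeakCompactness

section ConstraintSets

variable {α E : Type*} {m : MeasurableSpace α} {μ : Measure α} {p : ENNReal}
  [NormedAddCommGroup E]

theorem isClosed_setOf_ae_mem [Fact (1 ≤ p)] {s : Set E} (hs : IsClosed s) :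
    IsClosed {f : Lp E p μ | ∀ᵐ t ∂μ, f t ∈ s} := by
  refine isSeqClosed_iff_isClosed.mp fun f g hf hfg ↦ ?_
  obtain ⟨ns, -, hns⟩ := (tendstoInMeasure_of_tendsto_Lp hfg).exists_seq_tendsto_ae
  filter_upwards [hns, ae_all_iff.mpr hf] with t tendsto_t mem_t
  exact hs.mem_of_tendsto tendsto_t (.of_forall fun n ↦ mem_t (ns n))

variable [NormedSpace ℝ E]

theorem convex_setOf_ae_mem {s : Set E} (hs : Convex ℝ s) :
    Convex ℝ {f : Lp E p μ | ∀ᵐ t ∂μ, f t ∈ s} := by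
  intro f hf g hg a b ha hb hab
  filter_upwards [hf, hg, Lp.coeFn_add (a • f) (b • g), Lp.coeFn_smul a f, Lp.coeFn_smul b g]
    with t hft hgt hadd hsmul_f hsmul_g
  rw [hadd, Pi.add_apply, hsmul_f, hsmul_g]
  exact hs hft hgt ha hb hab

theorem convex_setOf_integral_eq [CompleteSpace E] (c : E) :
    Convex ℝ {f : Lp E 1 μ | ∫ t, f t ∂μ = c} := by
  simp only [← L1.integral_eq_integral, L1.integral_eq]
  exact (convex_singleton c).linear_preimage (L1.integralCLM (E := E) (μ := μ)).toLinearMap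

end ConstraintSets

section AlspachSet

variable {α : Type*} {m : MeasurableSpace α} {μ : Measure α}

/-- Alspach's set `{f ∈ L¹(μ) : 0 ≤ f ≤ 2, ∫ f = 1}`. -/
def alspachSet (μ : Measure α) : Set (Lp ℝ 1 μ) :=
  {f | ∀ᵐ t ∂μ, f t ∈ Icc 0 2} ∩ {f | ∫ t, f t ∂μ = 1}

theorem ae_mem_Icc_of_mem_alspachSet {f : Lp ℝ 1 μ} (hf : f ∈ alspachSet μ) :
    ∀ᵐ t ∂μ, f t ∈ Icc 0 2 :=
  hf.1

variable (μ)

theorem alspachSet_nonempty [IsProbabilityMeasure μ] : (alspachSet μ).Nonempty := by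
  have coeFn_one : Lp.const 1 μ (1 : ℝ) =ᵐ[μ] fun _ ↦ 1 := Lp.coeFn_const 1 μ (1 : ℝ)
  refine ⟨Lp.const 1 μ 1, ?_, ?_⟩
  · filter_upwards [coeFn_one] with t ht
    rw [ht]
    exact ⟨zero_le_one, one_le_two⟩
  · rw [mem_ofPred_eq, integral_congr_ae coeFn_one, integral_const, probReal_univ, one_smul]

theorem convex_alspachSet : Convex ℝ (alspachSet μ) :=
  (convex_setOf_ae_mem (convex_Icc 0 2)).inter (convex_setOf_integral_eq 1)

theorem isClosed_alspachSet : IsClosed (alspachSet μ) :=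
  (isClosed_setOf_ae_mem isClosed_Icc).inter (isClosed_eq continuous_integral continuous_const)

theorem isCompact_toWeakSpace_image_alspachSet [IsFiniteMeasure μ] :
    IsCompact (toWeakSpace ℝ (Lp ℝ 1 μ) '' alspachSet μ) := by
  refine isCompact_toWeakSpace_image_of_ae_norm_le (convex_alspachSet μ) (isClosed_alspachSet μ)
    (integrable_const 2) fun f hf ↦ ?_
  filter_upwards [ae_mem_Icc_of_mem_alspachSet hf] with t ht
  exact (Real.norm_of_nonneg ht.1).trans_le ht.2

end AlspachSet

section DoublingMap

theorem measurePreserving_coe_equivIco (T : ℝ) [Fact (0 < T)] (a : ℝ) :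
    MeasurePreserving (fun x : AddCircle T ↦ (AddCircle.equivIco T a x : ℝ)) volume
      (volume.restrict (Ico a (a + T))) := by
  have measurable_coe_equivIco : Measurable fun x : AddCircle T ↦ (AddCircle.equivIco T a x : ℝ) :=
    measurable_subtype_coe.comp (AddCircle.measurableEquivIco T a).measurable
  have measurePreserving_mk := AddCircle.measurePreserving_mk T a
  rw [← Measure.restrict_congr_set Ico_ae_eq_Ioc] at measurePreserving_mk
  refine ⟨measurable_coe_equivIco, ?_⟩
  rw [← measurePreserving_mk.map_eq,
    Measure.map_map measurable_coe_equivIco measurePreserving_mk.measurable]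
  refine (Measure.map_congr ?_).trans Measure.map_id
  filter_upwards [ae_restrict_mem measurableSet_Ico] with t ht
  exact AddCircle.equivIco_coe_of_mem ht

theorem ergodic_fract_nat_mul {n : ℕ} (hn : 1 < n) :
    Ergodic (fun t : ℝ ↦ Int.fract (n * t)) (volume.restrict (Icc 0 1)) := by
  let repr : UnitAddCircle → ℝ := fun x ↦ AddCircle.equivIco 1 0 x
  have repr_coe (t : ℝ) : repr t = Int.fract t := by
    simpa only [div_one, mul_one] using AddCircle.coe_equivIco_mk_apply (1 : ℝ) t
  have measurePreserving_repr : MeasurePreserving repr volume (volume.restrict (Icc 0 1)) := by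
    simpa only [zero_add, Measure.restrict_congr_set Ico_ae_eq_Icc]
      using measurePreserving_coe_equivIco 1 0
  refine measurePreserving_repr.ergodic_of_ergodic_semiconj (AddCircle.ergodic_nsmul hn)
    (by fun_prop) fun x ↦ ?_
  obtain ⟨t, rfl⟩ := QuotientAddGroup.mk_surjective x
  calc repr (n • (t : UnitAddCircle)) = Int.fract (n * t) := by
        rw [← AddCircle.coe_nsmul, nsmul_eq_mul, repr_coe]
    _ = Int.fract (n * Int.fract t) := by
        rw [Int.fract_eq_fract]
        exact ⟨n * ⌊t⌋, by push_cast; rw [← mul_sub, Int.self_sub_fract]⟩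
    _ = Int.fract (n * repr t) := by rw [repr_coe]

/-- Lebesgue measure on `[0, 1]`, as a measure on `ℝ`. -/
noncomputable abbrev unitLebesgue : Measure ℝ := volume.restrict (Icc 0 1)

instance isProbabilityMeasure_unitLebesgue : IsProbabilityMeasure unitLebesgue :=
  ⟨by simp only [Measure.restrict_apply_univ, Real.volume_Icc, sub_zero, ENNReal.ofReal_one]⟩

/-- The doubling map `t ↦ 2 t mod 1`, with values in `[0, 1)`. -/
noncomputable def doublingMap (t : ℝ) : ℝ := Int.fract (2 * t)

theorem ergodic_doublingMap : Ergodic doublingMap unitLebesgue :=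
  mod_cast ergodic_fract_nat_mul one_lt_two

theorem ae_comp_doublingMap {P : ℝ → Prop} (hP : ∀ᵐ t ∂unitLebesgue, P t) :
    ∀ᵐ t ∂unitLebesgue, P (doublingMap t) :=
  ergodic_doublingMap.quasiMeasurePreserving.ae hP

end DoublingMap

section Juxtapose

variable {E : Type*}

/-- The function on `[0, 1]` whose graph consists of the graphs of `u` and `v` over `[0, 1]`,
compressed horizontally by a factor `2` and put side by side. -/
noncomputable def juxtapose (u v : ℝ → E) (t : ℝ) : E :=
  if t ≤ 1 / 2 then u (doublingMap t) else v (doublingMap t)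

theorem apply_juxtapose {F : Type*} (φ : E → F) (u v : ℝ → E) (t : ℝ) :
    φ (juxtapose u v t) = juxtapose (φ ∘ u) (φ ∘ v) t :=
  apply_ite φ _ _ _

theorem juxtapose_self (u : ℝ → E) : juxtapose u u = u ∘ doublingMap :=
  funext fun _ ↦ ite_self _

theorem juxtapose_sub_juxtapose [Sub E] (u v u' v' : ℝ → E) (t : ℝ) :
    juxtapose u v t - juxtapose u' v' t = juxtapose (u - u') (v - v') t :=
  (ite_sub_ite ..)

theorem ae_juxtapose_mem {u v : ℝ → E} {s : Set E} (hu : ∀ᵐ t ∂unitLebesgue, u t ∈ s)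
    (hv : ∀ᵐ t ∂unitLebesgue, v t ∈ s) : ∀ᵐ t ∂unitLebesgue, juxtapose u v t ∈ s := by
  filter_upwards [ae_comp_doublingMap hu, ae_comp_doublingMap hv] with t hut hvt
  unfold juxtapose
  split_ifs
  · exact hut
  · exact hvt

theorem juxtapose_ae_congr {u v u' v' : ℝ → E} (hu : u =ᵐ[unitLebesgue] u')
    (hv : v =ᵐ[unitLebesgue] v') : juxtapose u v =ᵐ[unitLebesgue] juxtapose u' v' := by
  filter_upwards [ae_comp_doublingMap hu, ae_comp_doublingMap hv] with t hut hvt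
  simp only [juxtapose, hut, hvt]

variable [NormedAddCommGroup E]

theorem integrable_juxtapose {u v : ℝ → E} (hu : Integrable u unitLebesgue)
    (hv : Integrable v unitLebesgue) : Integrable (juxtapose u v) unitLebesgue := by
  have integrable_comp {w : ℝ → E} (hw : Integrable w unitLebesgue) :
      Integrable (w ∘ doublingMap) unitLebesgue :=
    ergodic_doublingMap.toMeasurePreserving.integrable_comp_of_integrable hw
  exact Integrable.piecewise (s := Iic (1 / 2)) measurableSet_Iic
    (integrable_comp hu).integrableOn (integrable_comp hv).integrableOn

variable [NormedSpace ℝ E]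

theorem intervalIntegral_comp_fract_mul (u : ℝ → E) {c : ℝ} (hc : c ≠ 0) (a : ℝ) :
    ∫ t in a / c..(a + 1) / c, u (Int.fract (c * t)) = c⁻¹ • ∫ t in 0..1, u t := by
  have periodic_comp_fract : Function.Periodic (fun t : ℝ ↦ u (Int.fract t)) 1 := fun t ↦ by
    simp only [Int.fract_add_one]
  calc ∫ t in a / c..(a + 1) / c, u (Int.fract (c * t))
      = c⁻¹ • ∫ t in a..a + 1, u (Int.fract t) := by
        rw [intervalIntegral.integral_comp_mul_left (fun t ↦ u (Int.fract t)) hc,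
          mul_div_cancel₀ _ hc, mul_div_cancel₀ _ hc]
    _ = c⁻¹ • ∫ t in 0..1, u (Int.fract t) := by
        rw [periodic_comp_fract.intervalIntegral_add_eq a 0, zero_add]
    _ = c⁻¹ • ∫ t in 0..1, u t := by
        rw [intervalIntegral.integral_congr_Ioo_of_le zero_le_one fun t ht ↦
          congrArg u (Int.fract_eq_self.mpr ⟨ht.1.le, ht.2⟩)]

theorem integral_juxtapose {u v : ℝ → E} (hu : Integrable u unitLebesgue)
    (hv : Integrable v unitLebesgue) :
    ∫ t, juxtapose u v t ∂unitLebesgue =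
      (2⁻¹ : ℝ) • (∫ t, u t ∂unitLebesgue + ∫ t, v t ∂unitLebesgue) := by
  have integral_unitLebesgue (w : ℝ → E) : ∫ t, w t ∂unitLebesgue = ∫ t in 0..1, w t := by
    rw [intervalIntegral.integral_of_le zero_le_one, integral_Icc_eq_integral_Ioc]
  have intervalIntegrable_juxtapose {a b : ℝ} (ha : 0 ≤ a) (hab : a ≤ b) (hb : b ≤ 1) :
      IntervalIntegrable (juxtapose u v) volume a b := by
    rw [intervalIntegrable_iff_integrableOn_Icc_of_le hab]
    exact IntegrableOn.mono_set (integrable_juxtapose hu hv) (Icc_subset_Icc ha hb)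
  have integral_left : ∫ t in 0..1 / 2, juxtapose u v t = (2⁻¹ : ℝ) • ∫ t in 0..1, u t := by
    have eqOn_left : EqOn (juxtapose u v) (fun t ↦ u (Int.fract (2 * t))) (Ioo 0 (1 / 2)) :=
      fun t ht ↦ if_pos ht.2.le
    rw [intervalIntegral.integral_congr_Ioo_of_le (by norm_num) eqOn_left]
    simpa only [zero_div, zero_add] using intervalIntegral_comp_fract_mul u two_ne_zero 0
  have integral_right : ∫ t in 1 / 2..1, juxtapose u v t = (2⁻¹ : ℝ) • ∫ t in 0..1, v t := by
    have eqOn_right : EqOn (juxtapose u v) (fun t ↦ v (Int.fract (2 * t))) (Ioo (1 / 2) 1) :=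
      fun t ht ↦ if_neg ht.1.not_ge
    rw [intervalIntegral.integral_congr_Ioo_of_le (by norm_num) eqOn_right]
    simpa only [one_add_one_eq_two, div_self (two_ne_zero' ℝ)]
      using intervalIntegral_comp_fract_mul v two_ne_zero 1
  rw [integral_unitLebesgue, integral_unitLebesgue, integral_unitLebesgue, smul_add,
    ← integral_left, ← integral_right, intervalIntegral.integral_add_adjacent_intervals]
  · exact intervalIntegrable_juxtapose le_rfl (by norm_num) (by norm_num)
  · exact intervalIntegrable_juxtapose (by norm_num) (by norm_num) le_rfl

end Juxtapose

section Cuts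

/-- The part below height `2` of a column of height `2 * a`. -/
def lowerCut (a : ℝ) : ℝ := min (2 * a) 2

/-- The part above height `2` of a column of height `2 * a`. -/
def upperCut (a : ℝ) : ℝ := max (2 * a - 2) 0

theorem lowerCut_add_upperCut (a : ℝ) : lowerCut a + upperCut a = 2 * a := by
  grind [lowerCut, upperCut]

theorem lowerCut_mem_Icc {a : ℝ} (ha : a ∈ Icc 0 2) : lowerCut a ∈ Icc 0 2 := by
  grind [lowerCut]

theorem upperCut_mem_Icc {a : ℝ} (ha : a ∈ Icc 0 2) : upperCut a ∈ Icc 0 2 := by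
  grind [upperCut]

theorem abs_sub_add_abs_sub_of_monotone {α G : Type*} [LinearOrder α] [AddCommGroup G]
    [LinearOrder G] [IsOrderedAddMonoid G] {u v : α → G} (hu : Monotone u) (hv : Monotone v)
    (a b : α) : |u a - u b| + |v a - v b| = |(u a + v a) - (u b + v b)| := by
  wlog hab : a ≤ b generalizing a b
  · simpa only [abs_sub_comm] using this b a (le_of_not_ge hab)
  rw [abs_of_nonpos (sub_nonpos.mpr (hu hab)), abs_of_nonpos (sub_nonpos.mpr (hv hab)),
    abs_of_nonpos (sub_nonpos.mpr (add_le_add (hu hab) (hv hab)))]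
  abel

theorem abs_lowerCut_sub_add_abs_upperCut_sub (a b : ℝ) :
    |lowerCut a - lowerCut b| + |upperCut a - upperCut b| = 2 * |a - b| := by
  have monotone_lowerCut : Monotone lowerCut := fun x y hxy ↦ by grind [lowerCut]
  have monotone_upperCut : Monotone upperCut := fun x y hxy ↦ by grind [upperCut]
  rw [abs_sub_add_abs_sub_of_monotone monotone_lowerCut monotone_upperCut,
    lowerCut_add_upperCut, lowerCut_add_upperCut, ← mul_sub, abs_mul, abs_two]

theorem lowerCut_sq_add_upperCut_sq (a : ℝ) :
    lowerCut a ^ 2 + upperCut a ^ 2 = 2 * (a ^ 2 + ((lowerCut a - upperCut a) / 2) ^ 2) := by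
  linear_combination (lowerCut a + upperCut a + 2 * a) / 2 * lowerCut_add_upperCut a

variable {α : Type*} {m : MeasurableSpace α} {μ : Measure α} {p : ENNReal} {f : α → ℝ}

theorem memLp_lowerCut_comp (hf : MemLp f p μ) : MemLp (lowerCut ∘ f) p μ := by
  have continuous_lowerCut : Continuous lowerCut := by unfold lowerCut; fun_prop
  have abs_lowerCut_le (a : ℝ) : |lowerCut a| ≤ 2 * |a| := by grind [lowerCut]
  exact hf.of_le_mul (continuous_lowerCut.comp_aestronglyMeasurable hf.1)
    (.of_forall fun t ↦ abs_lowerCut_le (f t))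

theorem memLp_upperCut_comp (hf : MemLp f p μ) : MemLp (upperCut ∘ f) p μ := by
  have upperCut_comp_eq : upperCut ∘ f = (fun t ↦ 2 * f t) - lowerCut ∘ f := funext fun t ↦
    eq_sub_of_add_eq' (lowerCut_add_upperCut (f t))
  rw [upperCut_comp_eq]
  exact (hf.const_mul 2).sub (memLp_lowerCut_comp hf)

theorem integrable_lowerCut_comp (hf : Integrable f μ) : Integrable (lowerCut ∘ f) μ :=
  memLp_one_iff_integrable.mp (memLp_lowerCut_comp (memLp_one_iff_integrable.mpr hf))

theorem integrable_upperCut_comp (hf : Integrable f μ) : Integrable (upperCut ∘ f) μ :=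
  memLp_one_iff_integrable.mp (memLp_upperCut_comp (memLp_one_iff_integrable.mpr hf))

theorem integrable_sq_half_cut_diff (hf : MemLp f 2 μ) :
    Integrable (fun t ↦ ((lowerCut (f t) - upperCut (f t)) / 2) ^ 2) μ := by
  simpa only [div_eq_mul_inv, Pi.sub_apply, Function.comp_apply] using
    (((memLp_lowerCut_comp hf).sub (memLp_upperCut_comp hf)).mul_const 2⁻¹).integrable_sq

end Cuts

section AlspachMap

/-- Alspach's map: the graph of `f` is compressed to `[0, 1/2]`, stretched vertically by a factor
`2` and cut at height `2`, and the part above the cut is moved to `[1/2, 1]`. -/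
noncomputable def alspachMap (f : Lp ℝ 1 unitLebesgue) : Lp ℝ 1 unitLebesgue :=
  (integrable_juxtapose (integrable_lowerCut_comp (L1.integrable_coeFn f))
    (integrable_upperCut_comp (L1.integrable_coeFn f))).toL1 _

theorem coeFn_alspachMap (f : Lp ℝ 1 unitLebesgue) :
    alspachMap f =ᵐ[unitLebesgue] juxtapose (lowerCut ∘ f) (upperCut ∘ f) :=
  Integrable.coeFn_toL1 _

theorem norm_alspachMap_sub_alspachMap (f g : Lp ℝ 1 unitLebesgue) :
    ‖alspachMap f - alspachMap g‖ = ‖f - g‖ := by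
  have hf := L1.integrable_coeFn f
  have hg := L1.integrable_coeFn g
  let lowerDist : ℝ → ℝ := fun t ↦ |lowerCut (f t) - lowerCut (g t)|
  let upperDist : ℝ → ℝ := fun t ↦ |upperCut (f t) - upperCut (g t)|
  have integrable_lowerDist : Integrable lowerDist unitLebesgue :=
    ((integrable_lowerCut_comp hf).sub (integrable_lowerCut_comp hg)).abs
  have integrable_upperDist : Integrable upperDist unitLebesgue :=
    ((integrable_upperCut_comp hf).sub (integrable_upperCut_comp hg)).abs
  have norm_sub_ae_eq : (fun t ↦ ‖(alspachMap f - alspachMap g) t‖) =ᵐ[unitLebesgue]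
      juxtapose lowerDist upperDist := by
    filter_upwards [Lp.coeFn_sub (alspachMap f) (alspachMap g), coeFn_alspachMap f,
      coeFn_alspachMap g] with t hsub hft hgt
    rw [hsub, Pi.sub_apply, hft, hgt, juxtapose_sub_juxtapose, apply_juxtapose norm]
    rfl
  calc ‖alspachMap f - alspachMap g‖
      = 2⁻¹ * (∫ t, lowerDist t ∂unitLebesgue + ∫ t, upperDist t ∂unitLebesgue) := by
        rw [L1.norm_eq_integral_norm, integral_congr_ae norm_sub_ae_eq,
          integral_juxtapose integrable_lowerDist integrable_upperDist, smul_eq_mul]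
    _ = 2⁻¹ * ∫ t, 2 * |f t - g t| ∂unitLebesgue := by
        simp_rw [← integral_add integrable_lowerDist integrable_upperDist, lowerDist, upperDist,
          abs_lowerCut_sub_add_abs_upperCut_sub]
    _ = ∫ t, |f t - g t| ∂unitLebesgue := by
        rw [integral_const_mul, inv_mul_cancel_left₀ two_ne_zero]
    _ = ‖f - g‖ := by
        rw [L1.norm_eq_integral_norm]
        exact integral_congr_ae ((Lp.coeFn_sub f g).mono fun t ht ↦ (congrArg norm ht).symm)

theorem integral_alspachMap (f : Lp ℝ 1 unitLebesgue) :
    ∫ t, alspachMap f t ∂unitLebesgue = ∫ t, f t ∂unitLebesgue := by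
  have hl := integrable_lowerCut_comp (L1.integrable_coeFn f)
  have hu := integrable_upperCut_comp (L1.integrable_coeFn f)
  rw [integral_congr_ae (coeFn_alspachMap f), integral_juxtapose hl hu, ← integral_add hl hu]
  simp_rw [Function.comp_apply, lowerCut_add_upperCut]
  rw [integral_const_mul, smul_eq_mul, inv_mul_cancel_left₀ two_ne_zero]

theorem mapsTo_alspachMap_alspachSet :
    MapsTo alspachMap (alspachSet unitLebesgue) (alspachSet unitLebesgue) := by
  intro f hf
  have f_mem_Icc := ae_mem_Icc_of_mem_alspachSet hf
  refine ⟨?_, (integral_alspachMap f).trans hf.2⟩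
  filter_upwards [coeFn_alspachMap f,
    ae_juxtapose_mem (f_mem_Icc.mono fun _ ↦ lowerCut_mem_Icc)
      (f_mem_Icc.mono fun _ ↦ upperCut_mem_Icc)] with t hft mem_Icc
  rw [hft]
  exact mem_Icc

theorem integral_alspachMap_sq {f : Lp ℝ 1 unitLebesgue} (hf : MemLp f 2 unitLebesgue) :
    ∫ t, alspachMap f t ^ 2 ∂unitLebesgue = ∫ t, f t ^ 2 ∂unitLebesgue +
      ∫ t, ((lowerCut (f t) - upperCut (f t)) / 2) ^ 2 ∂unitLebesgue := by
  have integrable_lower_sq : Integrable (fun t ↦ lowerCut (f t) ^ 2) unitLebesgue :=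
    (memLp_lowerCut_comp hf).integrable_sq
  have integrable_upper_sq : Integrable (fun t ↦ upperCut (f t) ^ 2) unitLebesgue :=
    (memLp_upperCut_comp hf).integrable_sq
  have alspachMap_sq_ae_eq : (fun t ↦ alspachMap f t ^ 2) =ᵐ[unitLebesgue]
      juxtapose (fun t ↦ lowerCut (f t) ^ 2) (fun t ↦ upperCut (f t) ^ 2) := by
    filter_upwards [coeFn_alspachMap f] with t ht
    rw [ht, apply_juxtapose (· ^ 2)]
    rfl
  calc ∫ t, alspachMap f t ^ 2 ∂unitLebesgue
      = 2⁻¹ * ∫ t, (lowerCut (f t) ^ 2 + upperCut (f t) ^ 2) ∂unitLebesgue := by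
        rw [integral_congr_ae alspachMap_sq_ae_eq,
          integral_juxtapose integrable_lower_sq integrable_upper_sq, smul_eq_mul,
          integral_add integrable_lower_sq integrable_upper_sq]
    _ = ∫ t, (f t ^ 2 + ((lowerCut (f t) - upperCut (f t)) / 2) ^ 2) ∂unitLebesgue := by
        simp_rw [lowerCut_sq_add_upperCut_sq]
        rw [integral_const_mul, inv_mul_cancel_left₀ two_ne_zero]
    _ = _ := integral_add hf.integrable_sq (integrable_sq_half_cut_diff hf)

theorem ae_lowerCut_eq_upperCut_of_alspachMap_eq_self {f : Lp ℝ 1 unitLebesgue}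
    (hf : MemLp f 2 unitLebesgue) (hfix : alspachMap f = f) :
    ∀ᵐ t ∂unitLebesgue, lowerCut (f t) = upperCut (f t) := by
  have integral_sq_eq_zero :
      ∫ t, ((lowerCut (f t) - upperCut (f t)) / 2) ^ 2 ∂unitLebesgue = 0 := by
    have := integral_alspachMap_sq hf
    rwa [hfix, left_eq_add] at this
  filter_upwards [(integral_eq_zero_iff_of_nonneg (fun _ ↦ sq_nonneg _)
    (integrable_sq_half_cut_diff hf)).mp integral_sq_eq_zero] with t ht
  exact sub_eq_zero.mp ((div_eq_zero_iff.mp (sq_eq_zero_iff.mp ht)).resolve_right two_ne_zero)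

theorem exists_ae_eq_const_of_alspachMap_eq_self {f : Lp ℝ 1 unitLebesgue}
    (hf : MemLp f 2 unitLebesgue) (hfix : alspachMap f = f) :
    ∃ c, lowerCut c = upperCut c ∧ f =ᵐ[unitLebesgue] fun _ ↦ c := by
  have cuts_eq := ae_lowerCut_eq_upperCut_of_alspachMap_eq_self hf hfix
  have lowerCut_comp_ae_eq : lowerCut ∘ f =ᵐ[unitLebesgue] f := by
    filter_upwards [cuts_eq] with t ht
    rw [Function.comp_apply]
    linarith [lowerCut_add_upperCut (f t)]
  have upperCut_comp_ae_eq : upperCut ∘ f =ᵐ[unitLebesgue] f :=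
    Filter.EventuallyEq.trans (cuts_eq.mono fun _ ht ↦ ht.symm) lowerCut_comp_ae_eq
  have doubling_invariant : f ∘ doublingMap =ᵐ[unitLebesgue] f :=
    calc f ∘ doublingMap = juxtapose f f := (juxtapose_self f).symm
      _ =ᵐ[unitLebesgue] juxtapose (lowerCut ∘ f) (upperCut ∘ f) :=
        juxtapose_ae_congr lowerCut_comp_ae_eq.symm upperCut_comp_ae_eq.symm
      _ =ᵐ[unitLebesgue] alspachMap f := (coeFn_alspachMap f).symm
      _ = f := by rw [hfix]
  obtain ⟨c, f_ae_eq_c⟩ := ergodic_doublingMap.ae_eq_const_of_ae_eq_comp_ae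
    hf.aestronglyMeasurable doubling_invariant
  obtain ⟨t, cuts_eq_t, f_t_eq_c⟩ := (cuts_eq.and f_ae_eq_c).exists
  rw [f_t_eq_c] at cuts_eq_t
  exact ⟨c, cuts_eq_t, f_ae_eq_c⟩

theorem alspachMap_ne_self {f : Lp ℝ 1 unitLebesgue} (hf : f ∈ alspachSet unitLebesgue) :
    alspachMap f ≠ f := by
  intro hfix
  have memLp_two : MemLp f 2 unitLebesgue :=
    .of_bound (Lp.aestronglyMeasurable f) 2 <| (ae_mem_Icc_of_mem_alspachSet hf).mono fun t ht ↦
      (Real.norm_of_nonneg ht.1).trans_le ht.2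
  obtain ⟨c, cuts_eq, f_ae_eq_c⟩ := exists_ae_eq_const_of_alspachMap_eq_self memLp_two hfix
  have c_eq_one : c = 1 := by
    rw [← hf.2, integral_congr_ae f_ae_eq_c, integral_const, probReal_univ, one_smul]
  rw [c_eq_one] at cuts_eq
  norm_num [lowerCut, upperCut] at cuts_eq

end AlspachMap

/-- Alspach's theorem: `L¹([0,1])` fails the weak fixed point property.  There is a nonempty
convex weakly compact subset `K` of `L¹([0,1])` and an isometric (in particular non-expansive)
self-map of `K` without fixed points. -/
theorem alspach_L1_fails_weakFPP :
    ∃ K : Set (Lp ℝ 1 ((volume : Measure ℝ).restrict (Icc (0:ℝ) 1))),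
      K.Nonempty ∧ Convex ℝ K ∧
      IsCompact (toWeakSpace ℝ (Lp ℝ 1 ((volume : Measure ℝ).restrict (Icc (0:ℝ) 1))) '' K) ∧
      ∃ T, MapsTo T K K ∧ (∀ f ∈ K, ∀ g ∈ K, ‖T f - T g‖ = ‖f - g‖) ∧
        ∀ f ∈ K, T f ≠ f :=
  ⟨alspachSet unitLebesgue, alspachSet_nonempty _, convex_alspachSet _,
    isCompact_toWeakSpace_image_alspachSet _, alspachMap, mapsTo_alspachMap_alspachSet,
    fun f _ g _ ↦ norm_alspachMap_sub_alspachMap f g, fun _ ↦ alspachMap_ne_self⟩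
end
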